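/- (W7) Let (L;≤,⊕,',0,1) be a weak lattice effect algebra and a,b ∈ L. Then a ≤ b and a⊕b' ≠ 1 (with a⊕b' defined) hold if and only if there exists c ∈ L with c ≠ 0 such that a⊕c is defined and a⊕c ≤ b. -/

import Mathlib

/-- A weak lattice effect algebra: a bounded involutive lattice with a partial
binary operation ⊕, encoded as a total function `add` whose value is only
constrained (and only meaningful) on the definedness domain `a ≤ inv b`. -/
structure WeakLEA (L : Type*) [Lattice L] [BoundedOrder L] where
  inv : L → L
  inv_inv : ∀ a : L, inv (inv a) = a
  inv_antitone : ∀ a b : L, a ≤ b → inv b ≤ inv a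
  add : L → L → L
  comm : ∀ a b : L, a ≤ inv b → (b ≤ inv a ∧ add a b = add b a)
  assoc : ∀ a b c : L, b ≤ inv c → a ≤ inv (add b c) →
    (a ≤ inv b ∧ add a b ≤ inv c ∧ add a (add b c) = add (add a b) c)
  add_zero : ∀ a : L, add a ⊥ = a

variable {L : Type*} [Lattice L] [BoundedOrder L]

/-! Whether `a ⊕ c ⊕ x` is defined does not depend on the order in which `c` and `x` are added to
`a`. For `x = b'` this says that `a ⊕ c ≤ b` forces `a ≤ b`, and that for `a ≤ b` the elements `c`
with `a ⊕ c ≤ b` are exactly those below `(a ⊕ b')'`, the difference of `b` and `a`. A nonzero such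
`c` therefore exists if and only if `(a ⊕ b')' ≠ 0`, that is, `a ⊕ b' ≠ 1`. -/

namespace WeakLEA

variable (W : WeakLEA L) {a b c x : L}

lemma inv_le_inv_iff : W.inv a ≤ W.inv b ↔ b ≤ a :=
  ⟨fun h ↦ by simpa only [W.inv_inv] using W.inv_antitone _ _ h, W.inv_antitone b a⟩

lemma le_inv_comm : a ≤ W.inv b ↔ b ≤ W.inv a :=
  ⟨fun h ↦ (W.comm a b h).1, fun h ↦ (W.comm b a h).1⟩

lemma inv_bot : W.inv ⊥ = ⊤ :=
  top_le_iff.mp (W.le_inv_comm.mp bot_le)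

lemma inv_eq_bot_iff : W.inv a = ⊥ ↔ a = ⊤ := by
  rw [← le_bot_iff, ← W.inv_inv ⊥, W.inv_le_inv_iff, W.inv_bot, top_le_iff]

lemma le_inv_and_le_inv_add_swap (h : a ≤ W.inv c ∧ x ≤ W.inv (W.add a c)) :
    a ≤ W.inv x ∧ c ≤ W.inv (W.add a x) := by
  obtain ⟨hxa, hxac, _⟩ := W.assoc x a c h.1 h.2
  obtain ⟨hax, hcomm⟩ := W.comm x a hxa
  exact ⟨hax, W.le_inv_comm.mp (hcomm ▸ hxac)⟩

lemma le_inv_and_le_inv_add_comm :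
    (a ≤ W.inv c ∧ x ≤ W.inv (W.add a c)) ↔ (a ≤ W.inv x ∧ c ≤ W.inv (W.add a x)) :=
  ⟨W.le_inv_and_le_inv_add_swap, W.le_inv_and_le_inv_add_swap⟩

lemma le_inv_and_add_le_iff :
    (a ≤ W.inv c ∧ W.add a c ≤ b) ↔ (a ≤ b ∧ c ≤ W.inv (W.add a (W.inv b))) := by
  rw [← W.inv_le_inv_iff (a := b), W.le_inv_and_le_inv_add_comm, W.inv_inv]

end WeakLEA

/-- (W7): a ≤ b and a⊕b' ≠ 1 (with a⊕b' defined) iff there is c ≠ 0 such that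
a⊕c is defined and a⊕c ≤ b. -/
theorem weakLEA_W7 (W : WeakLEA L) (a b : L) :
    (a ≤ b ∧ a ≤ W.inv (W.inv b) ∧ W.add a (W.inv b) ≠ ⊤) ↔
      ∃ c : L, c ≠ ⊥ ∧ a ≤ W.inv c ∧ W.add a c ≤ b := by
  constructor
  · rintro ⟨hab, -, htop⟩
    exact ⟨W.inv (W.add a (W.inv b)), mt W.inv_eq_bot_iff.mp htop,
      W.le_inv_and_add_le_iff.mpr ⟨hab, le_rfl⟩⟩
  · rintro ⟨c, hc, hac⟩
    obtain ⟨hab, hle⟩ := W.le_inv_and_add_le_iff.mp hac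
    exact ⟨hab, (W.inv_inv b).symm ▸ hab, mt W.inv_eq_bot_iff.mpr (ne_bot_of_le_ne_bot hc hle)⟩
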